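/- arXiv:1804.01135 — 4 statements merged into one kernel-verified Lean document; each statement's English description precedes it below -/
import Mathlib

section
/- Let Ω ⊆ ℝ^d (d ≥ 1) be open, let D_x be C¹ on Ω, let σ_{x,a}, σ_{x,f} : Ω → ℝ, and let u₀ be C² on Ω with u₀ > 0, satisfying the diffusion equation -∇·(D_x∇u₀) + (σ_{x,a} + σ_{x,f})u₀ = 0 pointwise in Ω. Let γ_x, β_x, β_f ∈ ℝ with β_f ≠ 0 and β_f + γ_x ≠ 0, and define Q := γ_x D_x |∇u₀|² + (β_x σ_{x,a} + β_f σ_{x,f}) u₀², θ := (β_f - γ_x)/(β_f + γ_x), μ := β_x/β_f - 1, b := -(2/(1+θ)) σ_{x,a} μ, and c := (2/(1+θ)) Q/β_f. Then the function Ψ := u₀^{2/(1+θ)} satisfies ∇·(D_x∇Ψ) = bΨ + cΨ^{-θ} pointwise in Ω. -/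
/-!
With `p = 2 / (1 + θ) = (βf + γx) / βf`, the chain and product rules give
`∇·(D∇(u ^ p)) = p u ^ (p-1) ∇·(D∇u) + p (p-1) u ^ (p-2) D |∇u|²` (`divA_rpow`).
The diffusion equation replaces `∇·(D∇u)` by `(σxa + σxf) u`, the definition of `Q` replaces
`γx D |∇u|²`, and since `p - 1 = γx / βf` and `-θ p = p - 2`, the gradient terms combine into
`c Ψ ^ (-θ)`, leaving only `p σxa (1 - βx / βf)` in front of `Ψ = u ^ p`.
-/

open Real Set MeasureTheory Filter Topology

/-- Divergence-form operator `∇·(a∇u)(x) = ∑ i ∂_i (a ∂_i u)(x)`. -/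
noncomputable def divA {d : ℕ} (a u : EuclideanSpace ℝ (Fin d) → ℝ)
    (x : EuclideanSpace ℝ (Fin d)) : ℝ :=
  ∑ i : Fin d,
    fderiv ℝ (fun y => a y * fderiv ℝ u y (EuclideanSpace.single i (1 : ℝ))) x
      (EuclideanSpace.single i (1 : ℝ))

/-- Squared Euclidean norm of the gradient `|∇u|²(x)`. -/
noncomputable def gradSq {d : ℕ} (u : EuclideanSpace ℝ (Fin d) → ℝ)
    (x : EuclideanSpace ℝ (Fin d)) : ℝ :=
  ∑ i : Fin d, (fderiv ℝ u x (EuclideanSpace.single i (1 : ℝ))) ^ 2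

/-- Leibniz and chain rule for the divergence-form operator applied to a real power of a
positive `C²` function. -/
lemma divA_rpow {d : ℕ} {Ω : Set (EuclideanSpace ℝ (Fin d))} (hΩ : IsOpen Ω)
    {a u : EuclideanSpace ℝ (Fin d) → ℝ} (ha : ContDiffOn ℝ 1 a Ω) (hu : ContDiffOn ℝ 2 u Ω)
    (hpos : ∀ x ∈ Ω, 0 < u x) (p : ℝ) {x : EuclideanSpace ℝ (Fin d)} (hx : x ∈ Ω) :
    divA a (fun y => u y ^ p) x
      = p * u x ^ (p - 1) * divA a u x + p * (p - 1) * u x ^ (p - 2) * a x * gradSq u x := by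
  have hudiff : ∀ y ∈ Ω, DifferentiableAt ℝ u y := fun y hy =>
    (hu.contDiffAt (hΩ.mem_nhds hy)).differentiableAt (by norm_num)
  have hadiff : DifferentiableAt ℝ a x :=
    (ha.contDiffAt (hΩ.mem_nhds hx)).differentiableAt (by norm_num)
  have hfdiff : DifferentiableAt ℝ (fderiv ℝ u) x :=
    ((hu.contDiffAt (hΩ.mem_nhds hx)).fderiv_right (m := 1) (by norm_num)).differentiableAt
      (by norm_num)
  unfold divA gradSq
  rw [Finset.mul_sum, Finset.mul_sum, ← Finset.sum_add_distrib]
  refine Finset.sum_congr rfl fun i _ => ?_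
  set e : EuclideanSpace ℝ (Fin d) := EuclideanSpace.single i (1 : ℝ)
  -- The flux of `u ^ p` is `p u ^ (p-1)` times the flux of `u`, on the whole neighbourhood `Ω`.
  have hflux : (fun y => a y * fderiv ℝ (fun z => u z ^ p) y e)
      =ᶠ[𝓝 x] fun y => (p * u y ^ (p - 1)) * (a y * fderiv ℝ u y e) := by
    filter_upwards [hΩ.mem_nhds hx] with y hy
    rw [((hudiff y hy).hasFDerivAt.rpow_const (Or.inl (hpos y hy).ne')).fderiv]
    simp only [smul_apply, smul_eq_mul]
    ring
  rw [hflux.fderiv_eq]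
  have h1 : HasFDerivAt (fun y => p * u y ^ (p - 1)) _ x :=
    ((hudiff x hx).hasFDerivAt.rpow_const (p := p - 1) (Or.inl (hpos x hx).ne')).const_mul p
  have h2 : DifferentiableAt ℝ (fun y => a y * fderiv ℝ u y e) x :=
    hadiff.mul (hfdiff.clm_apply (differentiableAt_const e))
  rw [(h1.fun_mul h2.hasFDerivAt).fderiv]
  simp only [add_apply, smul_apply, smul_eq_mul]
  rw [show p - 1 - 1 = p - 2 by ring]
  ring

theorem stmt1 {d : ℕ} (hd : 1 ≤ d) (Ω : Set (EuclideanSpace ℝ (Fin d)))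
    (hΩ : IsOpen Ω) (Dx σxa σxf u₀ : EuclideanSpace ℝ (Fin d) → ℝ)
    (hD : ContDiffOn ℝ 1 Dx Ω) (hu : ContDiffOn ℝ 2 u₀ Ω)
    (hupos : ∀ x ∈ Ω, 0 < u₀ x)
    (hdiff : ∀ x ∈ Ω, -divA Dx u₀ x + (σxa x + σxf x) * u₀ x = 0)
    (γx βx βf : ℝ) (hβf : βf ≠ 0) (hsum : βf + γx ≠ 0)
    (Q : EuclideanSpace ℝ (Fin d) → ℝ)
    (hQ : ∀ x, Q x = γx * Dx x * gradSq u₀ x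
        + (βx * σxa x + βf * σxf x) * (u₀ x) ^ 2)
    (θ μ : ℝ) (hθ : θ = (βf - γx) / (βf + γx)) (hμ : μ = βx / βf - 1)
    (b c : EuclideanSpace ℝ (Fin d) → ℝ)
    (hb : ∀ x, b x = -(2 / (1 + θ)) * σxa x * μ)
    (hc : ∀ x, c x = (2 / (1 + θ)) * Q x / βf) :
    ∀ x ∈ Ω,
      divA Dx (fun y => u₀ y ^ (2 / (1 + θ))) x
        = b x * u₀ x ^ (2 / (1 + θ)) + c x * (u₀ x ^ (2 / (1 + θ))) ^ (-θ) := by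
  intro x hx
  have hp : 2 / (1 + θ) = 1 + γx / βf := by
    have h1 : 1 + θ = 2 * βf / (βf + γx) := by
      rw [hθ]
      field_simp
      ring
    rw [h1]
    field_simp
  have hpθ : (2 / (1 + θ)) * (-θ) = 2 / (1 + θ) - 2 := by
    rw [hp, hθ]
    field_simp
    ring
  have hux := hupos x hx
  have hdiv : divA Dx u₀ x = (σxa x + σxf x) * u₀ x := by linarith [hdiff x hx]
  rw [divA_rpow hΩ hD hu hupos _ hx, ← Real.rpow_mul hux.le, hpθ, hdiv, hb, hc, hQ, hμ]
  -- All powers are expressed through `u₀ ^ (p - 2)`.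
  have e1 : u₀ x ^ (2 / (1 + θ) - 1) = u₀ x ^ (2 / (1 + θ) - 2) * u₀ x := by
    rw [← Real.rpow_add_one hux.ne']
    congr 1
    ring
  have e2 : u₀ x ^ (2 / (1 + θ)) = u₀ x ^ (2 / (1 + θ) - 2) * u₀ x ^ 2 := by
    rw [← Real.rpow_add_natCast hux.ne']
    congr 1
    push_cast
    ring
  rw [e1, e2]
  generalize u₀ x ^ (2 / (1 + θ) - 2) = w
  rw [hp]
  field_simp
  ring
end

section
/- Let Ω ⊆ ℝ^d (d ≥ 1) be open, let D_x be C¹ on Ω, let σ_{x,a}, σ_{x,f} : Ω → ℝ, and let u₀ be C² on Ω with u₀ > 0, satisfying -∇·(D_x∇u₀) + (σ_{x,a} + σ_{x,f})u₀ = 0 pointwise in Ω. Let γ_x, β_x, β_f ∈ ℝ with β_f ≠ 0 and γ_x = -β_f, and define Q := γ_x D_x |∇u₀|² + (β_x σ_{x,a} + β_f σ_{x,f}) u₀² and μ := β_x/β_f - 1. Then the function Φ := log u₀ satisfies the Yamabe-type equation ∇·(D_x∇Φ) = -σ_{x,a} μ + (Q/β_f) e^{-2Φ} pointwise in Ω.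 -/
/-!
Since `∇ log u = u⁻¹ ∇u`, the product rule gives
`∇·(a ∇ log u) = u⁻¹ ∇·(a ∇u) - a |∇u|² / u²` (`divA_log`). The diffusion equation turns the
first term into `σxa + σxf`, and since `γx = -βf` the term `-a |∇u|² / u²` is the gradient part
of `(Q / βf) e^{-2Φ}`; the remaining terms agree by algebra.
-/

open Real Set MeasureTheory Filter Topology

/-- Chain rule for the divergence-form operator applied to a logarithm. -/
theorem divA_log {d : ℕ} {Ω : Set (EuclideanSpace ℝ (Fin d))} (hΩ : IsOpen Ω)
    {a u : EuclideanSpace ℝ (Fin d) → ℝ}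
    (ha : ContDiffOn ℝ 1 a Ω) (hu : ContDiffOn ℝ 2 u Ω) (hpos : ∀ x ∈ Ω, 0 < u x)
    {x : EuclideanSpace ℝ (Fin d)} (hx : x ∈ Ω) :
    divA a (fun y => Real.log (u y)) x
      = (u x)⁻¹ * divA a u x - a x * gradSq u x / (u x) ^ 2 := by
  have hud : ∀ y ∈ Ω, DifferentiableAt ℝ u y := fun y hy =>
    (hu.differentiableOn (by norm_num)).differentiableAt (hΩ.mem_nhds hy)
  have had : DifferentiableAt ℝ a x :=
    (ha.differentiableOn (by norm_num)).differentiableAt (hΩ.mem_nhds hx)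
  have hfd : DifferentiableAt ℝ (fderiv ℝ u) x :=
    ((hu.fderiv_of_isOpen hΩ (m := 1) (by norm_num)).differentiableOn
      (by norm_num)).differentiableAt (hΩ.mem_nhds hx)
  have hne : u x ≠ 0 := (hpos x hx).ne'
  unfold divA gradSq
  rw [Finset.mul_sum, Finset.mul_sum, Finset.sum_div, ← Finset.sum_sub_distrib]
  refine Finset.sum_congr rfl fun i _ => ?_
  set e : EuclideanSpace ℝ (Fin d) := EuclideanSpace.single i (1 : ℝ)
  -- The formula for `∇ log u` is needed on a neighbourhood of `x`, as it is differentiated again.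
  have heq : (fun y => a y * fderiv ℝ (fun y => Real.log (u y)) y e)
      =ᶠ[𝓝 x] fun y => (u y)⁻¹ * (a y * fderiv ℝ u y e) := by
    filter_upwards [hΩ.mem_nhds hx] with y hy
    rw [((hud y hy).hasFDerivAt.log (hpos y hy).ne').fderiv]
    simp only [smul_apply, smul_eq_mul]
    ring
  have hg : DifferentiableAt ℝ (fun y => a y * fderiv ℝ u y e) x :=
    had.mul (hfd.clm_apply (differentiableAt_const e))
  have hinv : HasFDerivAt (fun y => (u y)⁻¹) (-((u x) ^ 2)⁻¹ • fderiv ℝ u x) x :=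
    (hasDerivAt_inv hne).comp_hasFDerivAt x (hud x hx).hasFDerivAt
  rw [heq.fderiv_eq, (hinv.fun_mul hg.hasFDerivAt).fderiv]
  simp only [add_apply, smul_apply, smul_eq_mul]
  ring

theorem stmt2 {d : ℕ} (hd : 1 ≤ d) (Ω : Set (EuclideanSpace ℝ (Fin d)))
    (hΩ : IsOpen Ω) (Dx σxa σxf u₀ : EuclideanSpace ℝ (Fin d) → ℝ)
    (hD : ContDiffOn ℝ 1 Dx Ω) (hu : ContDiffOn ℝ 2 u₀ Ω)
    (hupos : ∀ x ∈ Ω, 0 < u₀ x)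
    (hdiff : ∀ x ∈ Ω, -divA Dx u₀ x + (σxa x + σxf x) * u₀ x = 0)
    (γx βx βf : ℝ) (hβf : βf ≠ 0) (hγ : γx = -βf)
    (Q : EuclideanSpace ℝ (Fin d) → ℝ)
    (hQ : ∀ x, Q x = γx * Dx x * gradSq u₀ x
        + (βx * σxa x + βf * σxf x) * (u₀ x) ^ 2)
    (μ : ℝ) (hμ : μ = βx / βf - 1) :
    ∀ x ∈ Ω,
      divA Dx (fun y => Real.log (u₀ y)) x
        = -σxa x * μ + (Q x / βf) * Real.exp (-2 * Real.log (u₀ x)) := by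
  intro x hx
  have hpos := hupos x hx
  have hne : u₀ x ≠ 0 := hpos.ne'
  have hexp : Real.exp (-2 * Real.log (u₀ x)) = ((u₀ x) ^ 2)⁻¹ := by
    rw [show -2 * Real.log (u₀ x) = -(Real.log (u₀ x) + Real.log (u₀ x)) by ring,
      Real.exp_neg, Real.exp_add, Real.exp_log hpos, sq]
  have hdiv : divA Dx u₀ x = (σxa x + σxf x) * u₀ x := by linarith [hdiff x hx]
  rw [divA_log hΩ hD hu hupos hx, hexp, hdiv, hQ, hμ, hγ]
  field_simp
  ring
end

section
/- Assume θ < 0 with θ ≠ -1, and b ≥ 0, c ≥ 0 on Ω. Let u, v ∈ C²(Ω) ∩ C¹(cl(Ω)) satisfy ∇·(a∇u) ≤ b·u + c·s_θ(u) pointwise in Ω (u is a supersolution of (★)) and ∇·(a∇v) ≥ b·v + c·s_θ(v) pointwise in Ω (v is a subsolution of (★)), and suppose u ≥ v on ∂Ω. Then u ≥ v everywhere in Ω. -/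
/-!
The nonlinearity `z ↦ b z + c s_θ(z)` is nondecreasing, so wherever `v > u` the difference `v - u`
satisfies `∇·(a∇(v - u)) ≥ 0`, and the claim is a weak maximum principle. To make the inequality
strict, add `ε φ` with `φ y = exp (l y₀)`: since `∂₀a` is bounded on the compact set `cl(Ω)` and
`a ≥ a₀ > 0`, a large `l` gives `∇·(a∇φ) > 0` on `Ω` (`divA_exp_coord`).

If `v > u` somewhere and `ε` is small, a maximum point of `v - u + ε φ` over `cl(Ω)` has `v > u`,
hence lies in `Ω`, where `∇·(a∇(v - u + ε φ)) > 0`. This contradicts the second-derivative test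
in divergence form (`divA_nonpos_of_isLocalMax`).
-/

open Real Set MeasureTheory Filter Topology

/-- `s_θ(z) = sign(z)·|z|^{-θ}`, so `s_θ(z) = z^{-θ}` for `z > 0` and `s_θ(0) = 0`. -/
noncomputable def sTheta (θ z : ℝ) : ℝ := Real.sign z * |z| ^ (-θ)

theorem sTheta_mono {θ : ℝ} (hθ : θ < 0) : Monotone (sTheta θ) := by
  intro z w h
  unfold sTheta
  rcases lt_trichotomy z 0 with hz | hz | hz
  · rcases lt_trichotomy w 0 with hw | hw | hw
    · rw [Real.sign_of_neg hz, Real.sign_of_neg hw, abs_of_neg hz, abs_of_neg hw]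
      have := Real.rpow_le_rpow (by linarith : 0 ≤ -w) (by linarith : -w ≤ -z)
        (by linarith : 0 ≤ -θ)
      linarith
    · rw [Real.sign_of_neg hz, hw, Real.sign_zero]
      have := Real.rpow_nonneg (abs_nonneg z) (-θ)
      linarith
    · rw [Real.sign_of_neg hz, Real.sign_of_pos hw]
      have := Real.rpow_nonneg (abs_nonneg z) (-θ)
      have := Real.rpow_nonneg (abs_nonneg w) (-θ)
      linarith
  · rcases (hz ▸ h : (0 : ℝ) ≤ w).eq_or_lt with hw | hw
    · rw [hz, ← hw]
    · rw [hz, Real.sign_zero, Real.sign_of_pos hw]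
      have := Real.rpow_nonneg (abs_nonneg w) (-θ)
      linarith
  · have hw : 0 < w := hz.trans_le h
    rw [Real.sign_of_pos hz, Real.sign_of_pos hw, abs_of_pos hz, abs_of_pos hw]
    have := Real.rpow_le_rpow hz.le h (by linarith : 0 ≤ -θ)
    linarith

/-- One-dimensional second-derivative test in divergence form: `(α g')'(0) ≤ 0` at a local maximum
of `g`. If it were positive, `α g'`, hence `g'`, would be positive just to the right of `0`. -/
theorem deriv_flux_nonpos {g g' α : ℝ → ℝ} {p : ℝ} (hmax : IsLocalMax g 0)
    (hg : ∀ᶠ t in 𝓝 0, HasDerivAt g (g' t) t) (hα : ∀ᶠ t in 𝓝 0, 0 < α t)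
    (hp : HasDerivAt (fun t => α t * g' t) p 0) : p ≤ 0 := by
  by_contra! hpos
  have h0 : g' 0 = 0 := hmax.hasDerivAt_eq_zero hg.self_of_nhds
  have hslope := hp.tendsto_slope
  have hev : ∀ᶠ t in 𝓝[≠] (0 : ℝ), 0 < slope (fun t => α t * g' t) 0 t :=
    hslope.eventually (lt_mem_nhds hpos)
  rw [eventually_nhdsWithin_iff] at hev
  obtain ⟨δ, hδ, hball⟩ := Metric.eventually_nhds_iff.1 (hev.and (hg.and (hα.and hmax)))
  have key : ∀ t, 0 ≤ t → t < δ → dist t 0 < δ := by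
    intro t h1 h2
    rw [Real.dist_eq, sub_zero, abs_of_nonneg h1]; exact h2
  have hmono : StrictMonoOn g (Icc 0 (δ / 2)) := by
    apply strictMonoOn_of_deriv_pos (convex_Icc _ _)
    · intro t ht
      exact (hball (key t ht.1 (by linarith [ht.2]))).2.1.continuousAt.continuousWithinAt
    · intro t ht
      rw [interior_Icc] at ht
      obtain ⟨h1, h2, h3, -⟩ := hball (key t ht.1.le (by linarith [ht.2]))
      rw [h2.deriv]
      have h4 := h1 ht.1.ne'
      rw [slope_def_field, h0, mul_zero, sub_zero, sub_zero] at h4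
      have h5 : 0 < α t * g' t := by
        have := mul_pos h4 ht.1
        rwa [div_mul_cancel₀ _ ht.1.ne'] at this
      exact (pos_iff_pos_of_mul_pos h5).1 h3
  have h1 := hmono (left_mem_Icc.2 (by linarith)) (right_mem_Icc.2 (by linarith))
    (by linarith : (0 : ℝ) < δ / 2)
  have h2 := (hball (key (δ / 2) (by linarith) (by linarith))).2.2.2
  linarith

theorem differentiableAt_flux {d : ℕ} {a f : EuclideanSpace ℝ (Fin d) → ℝ}
    {x : EuclideanSpace ℝ (Fin d)} (ha : DifferentiableAt ℝ a x) (hf : ContDiffAt ℝ 2 f x)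
    (e : EuclideanSpace ℝ (Fin d)) :
    DifferentiableAt ℝ (fun y => a y * fderiv ℝ f y e) x := by
  have h : ContDiffAt ℝ 1 (fderiv ℝ f) x := hf.fderiv_right (by norm_num)
  exact ha.mul ((h.differentiableAt (by norm_num)).clm_apply (differentiableAt_const e))

theorem divA_nonpos_of_isLocalMax {d : ℕ} {a f : EuclideanSpace ℝ (Fin d) → ℝ}
    {x : EuclideanSpace ℝ (Fin d)} (ha : DifferentiableAt ℝ a x) (hapos : ∀ᶠ y in 𝓝 x, 0 < a y)
    (hf : ContDiffAt ℝ 2 f x) (hmax : IsLocalMax f x) : divA a f x ≤ 0 := by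
  apply Finset.sum_nonpos
  intro i _
  set e : EuclideanSpace ℝ (Fin d) := EuclideanSpace.single i (1 : ℝ)
  have hline : ∀ t : ℝ, HasDerivAt (fun t : ℝ => x + t • e) e t := by
    intro t
    simpa using ((hasDerivAt_id t).smul_const e).const_add x
  have hx0 : x + (0 : ℝ) • e = x := by simp
  have htend : Tendsto (fun t : ℝ => x + t • e) (𝓝 0) (𝓝 x) := by
    have := (hline 0).continuousAt.tendsto
    rwa [hx0] at this
  refine deriv_flux_nonpos (g := fun t => f (x + t • e)) (g' := fun t => fderiv ℝ f (x + t • e) e)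
    (α := fun t => a (x + t • e)) ?_ ?_ (htend.eventually hapos) ?_
  · have := htend.eventually hmax
    simpa [IsLocalMax, IsMaxFilter] using this
  · have hd : ∀ᶠ y in 𝓝 x, DifferentiableAt ℝ f y :=
      (hf.eventually (by simp)).mono fun y hy => hy.differentiableAt (by norm_num)
    filter_upwards [htend.eventually hd] with t ht
    exact ht.hasFDerivAt.comp_hasDerivAt t (hline t)
  · have h := (differentiableAt_flux ha hf e).hasFDerivAt
    rw [← hx0] at h
    have h' := h.comp_hasDerivAt (0 : ℝ) (hline 0)
    rw [hx0] at h'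
    exact h'

theorem divA_sub_add {d : ℕ} {a u v φ : EuclideanSpace ℝ (Fin d) → ℝ}
    {x : EuclideanSpace ℝ (Fin d)} (ε : ℝ) (ha : DifferentiableAt ℝ a x)
    (hu : ContDiffAt ℝ 2 u x) (hv : ContDiffAt ℝ 2 v x) (hφ : ContDiffAt ℝ 2 φ x) :
    divA a (fun y => v y - u y + ε * φ y) x = divA a v x - divA a u x + ε * divA a φ x := by
  unfold divA
  rw [Finset.mul_sum, ← Finset.sum_sub_distrib, ← Finset.sum_add_distrib]
  refine Finset.sum_congr rfl fun i _ => ?_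
  set e : EuclideanSpace ℝ (Fin d) := EuclideanSpace.single i (1 : ℝ)
  have hev : ∀ {f : EuclideanSpace ℝ (Fin d) → ℝ}, ContDiffAt ℝ 2 f x →
      ∀ᶠ y in 𝓝 x, DifferentiableAt ℝ f y := fun hf =>
    (hf.eventually (by simp)).mono fun y hy => hy.differentiableAt (by norm_num)
  have heq : (fun y => a y * fderiv ℝ (fun y => v y - u y + ε * φ y) y e) =ᶠ[𝓝 x]
      fun y => a y * fderiv ℝ v y e - a y * fderiv ℝ u y e + ε * (a y * fderiv ℝ φ y e) := by
    filter_upwards [hev hu, hev hv, hev hφ] with y h1 h2 h3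
    have := ((h2.hasFDerivAt.sub h1.hasFDerivAt).add (h3.hasFDerivAt.const_mul ε)).fderiv
    have h4 : fderiv ℝ (fun y => v y - u y + ε * φ y) y =
      fderiv ℝ v y - fderiv ℝ u y + ε • fderiv ℝ φ y := this
    rw [h4]
    simp
    ring
  rw [heq.fderiv_eq]
  have h := ((differentiableAt_flux ha hv e).hasFDerivAt.sub
    (differentiableAt_flux ha hu e).hasFDerivAt).add
    ((differentiableAt_flux ha hφ e).hasFDerivAt.const_mul ε)
  have h' := DFunLike.congr_fun h.fderiv e
  exact h'

theorem hasFDerivAt_exp_coord {d : ℕ} (i₀ : Fin d) (l : ℝ) (y : EuclideanSpace ℝ (Fin d)) :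
    HasFDerivAt (fun y : EuclideanSpace ℝ (Fin d) => Real.exp (l * y i₀))
      ((Real.exp (l * y i₀) * l) • (EuclideanSpace.proj i₀ : EuclideanSpace ℝ (Fin d) →L[ℝ] ℝ))
      y := by
  have h := ((EuclideanSpace.proj i₀ :
    EuclideanSpace ℝ (Fin d) →L[ℝ] ℝ).hasFDerivAt (x := y)).const_mul l
  have h2 := h.exp
  rw [smul_smul] at h2
  exact h2

theorem divA_exp_coord {d : ℕ} {a : EuclideanSpace ℝ (Fin d) → ℝ}
    {x : EuclideanSpace ℝ (Fin d)} (ha : DifferentiableAt ℝ a x) (i₀ : Fin d) (l : ℝ) :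
    divA a (fun y => Real.exp (l * y i₀)) x =
      Real.exp (l * x i₀) * l * (fderiv ℝ a x (EuclideanSpace.single i₀ (1 : ℝ)) + a x * l) := by
  unfold divA
  rw [Finset.sum_eq_single i₀]
  · simp only [(hasFDerivAt_exp_coord i₀ l _).fderiv]
    have h := (ha.hasFDerivAt.mul ((hasFDerivAt_exp_coord i₀ l x).mul_const l)).fderiv
    have h' := DFunLike.congr_fun h (EuclideanSpace.single i₀ (1 : ℝ))
    simp at h' ⊢
    refine Eq.trans h' ?_
    ring
  · intro i _ hi
    simp [(hasFDerivAt_exp_coord i₀ l _).fderiv, hi.symm]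
  · simp

theorem stmt3 {d : ℕ} (hd : 1 ≤ d) (Ω U : Set (EuclideanSpace ℝ (Fin d)))
    (hΩo : IsOpen Ω) (hΩb : Bornology.IsBounded Ω)
    (hU : IsOpen U) (hUΩ : closure Ω ⊆ U)
    (a b c : EuclideanSpace ℝ (Fin d) → ℝ)
    (ha : ContDiffOn ℝ 1 a U) (a₀ : ℝ) (ha₀ : 0 < a₀) (halb : ∀ x ∈ Ω, a₀ ≤ a x)
    (hbcont : ContinuousOn b (closure Ω)) (hccont : ContinuousOn c (closure Ω))
    (θ : ℝ) (hθneg : θ < 0) (hθne : θ ≠ -1)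
    (hbnn : ∀ x ∈ Ω, 0 ≤ b x) (hcnn : ∀ x ∈ Ω, 0 ≤ c x)
    (u v : EuclideanSpace ℝ (Fin d) → ℝ)
    (hu2 : ContDiffOn ℝ 2 u Ω) (hu1 : ContDiffOn ℝ 1 u (closure Ω))
    (hv2 : ContDiffOn ℝ 2 v Ω) (hv1 : ContDiffOn ℝ 1 v (closure Ω))
    (hsuper : ∀ x ∈ Ω, divA a u x ≤ b x * u x + c x * sTheta θ (u x))
    (hsub : ∀ x ∈ Ω, b x * v x + c x * sTheta θ (v x) ≤ divA a v x)
    (hbdry : ∀ x ∈ frontier Ω, v x ≤ u x) :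
    ∀ x ∈ Ω, v x ≤ u x := by
  by_contra! hcon
  obtain ⟨x₀, hx₀, hx₀lt⟩ := hcon
  have hK : IsCompact (closure Ω) := hΩb.isCompact_closure
  have hKne : (closure Ω).Nonempty := ⟨x₀, subset_closure hx₀⟩
  have hΩK : Ω ⊆ closure Ω := subset_closure
  set i₀ : Fin d := ⟨0, hd⟩
  have had : ∀ x ∈ closure Ω, DifferentiableAt ℝ a x := fun x hx =>
    (ha.contDiffAt (hU.mem_nhds (hUΩ hx))).differentiableAt (by norm_num)
  obtain ⟨M, hM⟩ : ∃ M, ∀ x ∈ closure Ω,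
      ‖fderiv ℝ a x (EuclideanSpace.single i₀ (1 : ℝ))‖ ≤ M :=
    hK.exists_bound_of_continuousOn
      (((ha.continuousOn_fderiv_of_isOpen hU le_rfl).mono hUΩ).clm_apply continuousOn_const)
  have hM0 : 0 ≤ M := (norm_nonneg _).trans (hM x₀ (hΩK hx₀))
  -- With this exponent, `∂₀a + a l ≥ -M + a₀ l = 1 > 0` on `Ω`.
  set l : ℝ := (M + 1) / a₀
  have hl : 0 < l := by positivity
  have hal : a₀ * l = M + 1 := by simp only [l]; field_simp
  set φ : EuclideanSpace ℝ (Fin d) → ℝ := fun y => Real.exp (l * y i₀)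
  have hφ : ContDiff ℝ 2 φ := by
    have : ContDiff ℝ 2 (fun y : EuclideanSpace ℝ (Fin d) => y i₀) :=
      (EuclideanSpace.proj i₀ : EuclideanSpace ℝ (Fin d) →L[ℝ] ℝ).contDiff
    exact (contDiff_const.mul this).exp
  have hφpos : ∀ y, 0 < φ y := fun y => Real.exp_pos _
  obtain ⟨B, hB⟩ := hK.exists_bound_of_continuousOn hφ.continuous.continuousOn
  have hφB : ∀ y ∈ closure Ω, φ y ≤ B := fun y hy => (le_abs_self _).trans (hB y hy)
  have hB0 : 0 < B := (hφpos x₀).trans_le (hφB x₀ (hΩK hx₀))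
  -- `ε` is small enough that a maximum of `v - u + ε φ` can only lie where `v - u > 0`.
  set ε : ℝ := (v x₀ - u x₀) / B
  have hε : 0 < ε := div_pos (by linarith) hB0
  have hεB : ε * B = v x₀ - u x₀ := div_mul_cancel₀ _ hB0.ne'
  set w : EuclideanSpace ℝ (Fin d) → ℝ := fun y => v y - u y + ε * φ y with hw
  have hwc : ContinuousOn w (closure Ω) :=
    (hv1.continuousOn.sub hu1.continuousOn).add
      (continuousOn_const.mul hφ.continuous.continuousOn)
  obtain ⟨x, hxK, hxmax⟩ := hK.exists_isMaxOn hKne hwc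
  have hpos : u x < v x := by
    have h1 : v x₀ - u x₀ + ε * φ x₀ ≤ v x - u x + ε * φ x := hxmax (hΩK hx₀)
    have h2 : ε * φ x ≤ ε * B := mul_le_mul_of_nonneg_left (hφB x hxK) hε.le
    have h3 : 0 < ε * φ x₀ := mul_pos hε (hφpos x₀)
    linarith
  have hx : x ∈ Ω := by
    by_contra hxn
    have : x ∈ frontier Ω := ⟨hxK, by rwa [hΩo.interior_eq]⟩
    exact absurd (hbdry x this) (not_le.2 hpos)
  have hnx : Ω ∈ 𝓝 x := hΩo.mem_nhds hx
  have hu := hu2.contDiffAt hnx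
  have hv := hv2.contDiffAt hnx
  have hlocmax : IsLocalMax w x := hxmax.isLocalMax (mem_of_superset hnx hΩK)
  have hle : divA a w x ≤ 0 :=
    divA_nonpos_of_isLocalMax (had x hxK)
      (mem_of_superset hnx fun y hy => ha₀.trans_le (halb y hy))
      ((hv.sub hu).add (contDiffAt_const.mul hφ.contDiffAt)) hlocmax
  rw [hw, divA_sub_add ε (had x hxK) hu hv hφ.contDiffAt, divA_exp_coord (had x hxK) i₀ l] at hle
  have hda := (abs_le.1 (hM x hxK)).1
  have h1 : a₀ * l ≤ a x * l := mul_le_mul_of_nonneg_right (halb x hx) hl.le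
  have h2 : 0 < ε * (Real.exp (l * x i₀) * l *
      (fderiv ℝ a x (EuclideanSpace.single i₀ (1 : ℝ)) + a x * l)) :=
    mul_pos hε (mul_pos (mul_pos (Real.exp_pos _) hl) (by linarith))
  have h3 := hsuper x hx
  have h4 := hsub x hx
  have h5 : b x * u x ≤ b x * v x := mul_le_mul_of_nonneg_left hpos.le (hbnn x hx)
  have h6 : c x * sTheta θ (u x) ≤ c x * sTheta θ (v x) :=
    mul_le_mul_of_nonneg_left (sTheta_mono hθneg hpos.le) (hcnn x hx)
  linarith
end

section
/- Let d ≥ 1 and -1 < θ < 0. Let Ω ⊂ ℝ^d be a bounded open set and suppose there are constants 0 < l₀ < l₁ with l₀ ≤ |x| ≤ l₁ for all x ∈ cl(Ω). Let a be C¹ on an open neighborhood of cl(Ω) with a₀ ≤ a ≤ A₁ and |∇a| ≤ A₂ on cl(Ω) for constants 0 < a₀ ≤ A₁ and A₂ ≥ 0, and let b, c be continuous on cl(Ω) with 0 ≤ b ≤ B and 0 ≤ c ≤ C₀ for constants B, C₀ ≥ 0. Then there exist constants κ > 0 and m > 0 such that the function Ψ̲(x) := κ|x|^{2m} satisfies ∇·(a∇Ψ̲)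 > b·Ψ̲ + c·Ψ̲^{-θ} at every point of Ω; that is, Ψ̲ is a strict classical subsolution of the semilinear equation. -/
/-!
On `Ω`, with `Ψ = κ|x|^{2m}`, one has
`∇·(a∇Ψ) = κ|x|^{2m-2} (4 a m² + 2 (∇a·x + a(d-2)) m)` (`divA_norm_rpow`).
The choice `κ = l₀^{-2m}` gives `Ψ ≥ 1`, hence `Ψ^{-θ} ≤ Ψ` because `-θ < 1`. It is therefore enough
that the bracket exceeds `(B + C₀) l₁² ≥ (b + c)|x|²`, which holds for `m` large, the
quadratic term `4 a₀ m²` dominating the linear one.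
-/

open Real Set MeasureTheory Filter Topology

/-- The divergence of `a∇(κ|x|^{2m})`. The bound `3/2 < m` makes both `|y|^{2m}` and `|y|^{2m-2}`
differentiable everywhere, the origin included. -/
theorem divA_norm_rpow {d : ℕ} (a : EuclideanSpace ℝ (Fin d) → ℝ) (κ m : ℝ) (hm : 3 / 2 < m)
    (x : EuclideanSpace ℝ (Fin d)) (hx : x ≠ 0) (ha : DifferentiableAt ℝ a x) :
    divA a (fun y => κ * ‖y‖ ^ (2 * m)) x =
      κ * ‖x‖ ^ (2 * m - 2) * (4 * a x * m ^ 2 + 2 * (fderiv ℝ a x x + a x * (d - 2)) * m) := by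
  have hgrad : ∀ (y : EuclideanSpace ℝ (Fin d)) (i : Fin d),
      fderiv ℝ (fun y : EuclideanSpace ℝ (Fin d) => κ * ‖y‖ ^ (2 * m)) y
        (EuclideanSpace.single i (1 : ℝ)) = κ * (2 * m) * (‖y‖ ^ (2 * m - 2) * y i) := by
    intro y i
    have h := (hasFDerivAt_norm_rpow y (p := 2 * m) (by linarith)).const_mul κ
    rw [h.fderiv]
    simp [EuclideanSpace.inner_single_right]
    ring
  have hterm : ∀ i : Fin d,
      fderiv ℝ (fun y => a y * fderiv ℝ (fun y : EuclideanSpace ℝ (Fin d) => κ * ‖y‖ ^ (2 * m)) y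
        (EuclideanSpace.single i (1 : ℝ))) x (EuclideanSpace.single i (1 : ℝ)) =
      κ * (2 * m) * ‖x‖ ^ (2 * m - 2) * (x i * fderiv ℝ a x (EuclideanSpace.single i (1 : ℝ)))
      + κ * (2 * m) * a x * (2 * m - 2) * ‖x‖ ^ (2 * m - 2 - 2) * (x i) ^ 2
      + κ * (2 * m) * a x * ‖x‖ ^ (2 * m - 2) := by
    intro i
    simp_rw [hgrad]
    have h1 := hasFDerivAt_norm_rpow x (p := 2 * m - 2) (by linarith)
    have h2 : HasFDerivAt (fun y : EuclideanSpace ℝ (Fin d) => y i)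
        (EuclideanSpace.proj i : EuclideanSpace ℝ (Fin d) →L[ℝ] ℝ) x :=
      (EuclideanSpace.proj i : EuclideanSpace ℝ (Fin d) →L[ℝ] ℝ).hasFDerivAt
    have h := ha.hasFDerivAt.mul ((h1.mul h2).const_mul (κ * (2 * m)))
    have hf : fderiv ℝ (fun y => a y * (κ * (2 * m) * (‖y‖ ^ (2 * m - 2) * y i))) x = _ := h.fderiv
    rw [hf]
    simp [EuclideanSpace.inner_single_right]
    ring
  have hsq : ∑ i : Fin d, (x i) ^ 2 = ‖x‖ ^ 2 := (EuclideanSpace.real_norm_sq_eq x).symm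
  have hdir : ∑ i : Fin d, x i * fderiv ℝ a x (EuclideanSpace.single i (1 : ℝ))
      = fderiv ℝ a x x := by
    have hx' : x = ∑ i : Fin d, x i • EuclideanSpace.single i (1 : ℝ) := by
      simpa using ((EuclideanSpace.basisFun (Fin d) ℝ).sum_repr x).symm
    conv_rhs => arg 2; rw [hx']
    simp [map_sum]
  have hpow : ‖x‖ ^ (2 * m - 2 - 2) * ‖x‖ ^ 2 = ‖x‖ ^ (2 * m - 2) := by
    rw [← Real.rpow_natCast, ← Real.rpow_add (norm_pos_iff.mpr hx)]
    congr 1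
    push_cast
    ring
  unfold divA
  rw [Finset.sum_congr rfl fun i _ => hterm i, Finset.sum_add_distrib, Finset.sum_add_distrib,
    ← Finset.mul_sum, ← Finset.mul_sum, hdir, hsq]
  simp only [Finset.sum_const, Finset.card_univ, Fintype.card_fin, nsmul_eq_mul]
  rw [← hpow]
  ring

theorem stmt6 {d : ℕ} (hd : 1 ≤ d) (Ω U : Set (EuclideanSpace ℝ (Fin d)))
    (hΩo : IsOpen Ω) (hΩb : Bornology.IsBounded Ω)
    (θ : ℝ) (hθ₁ : -1 < θ) (hθ₂ : θ < 0)
    (l₀ l₁ : ℝ) (hl₀ : 0 < l₀) (hl : l₀ < l₁)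
    (hnorm : ∀ x ∈ closure Ω, l₀ ≤ ‖x‖ ∧ ‖x‖ ≤ l₁)
    (hU : IsOpen U) (hUΩ : closure Ω ⊆ U)
    (a b c : EuclideanSpace ℝ (Fin d) → ℝ)
    (ha : ContDiffOn ℝ 1 a U)
    (a₀ A₁ A₂ B C₀ : ℝ) (ha₀ : 0 < a₀) (haA : a₀ ≤ A₁) (hA₂ : 0 ≤ A₂)
    (hB : 0 ≤ B) (hC₀ : 0 ≤ C₀)
    (halb : ∀ x ∈ closure Ω, a₀ ≤ a x) (haub : ∀ x ∈ closure Ω, a x ≤ A₁)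
    (hagrad : ∀ x ∈ closure Ω, ‖fderiv ℝ a x‖ ≤ A₂)
    (hbcont : ContinuousOn b (closure Ω)) (hccont : ContinuousOn c (closure Ω))
    (hblb : ∀ x ∈ closure Ω, 0 ≤ b x) (hbub : ∀ x ∈ closure Ω, b x ≤ B)
    (hclb : ∀ x ∈ closure Ω, 0 ≤ c x) (hcub : ∀ x ∈ closure Ω, c x ≤ C₀) :
    ∃ κ m : ℝ, 0 < κ ∧ 0 < m ∧
      ∀ x ∈ Ω,
        b x * (κ * ‖x‖ ^ (2 * m)) + c x * (κ * ‖x‖ ^ (2 * m)) ^ (-θ)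
          < divA a (fun y => κ * ‖y‖ ^ (2 * m)) x := by
  have hl₁ : 0 < l₁ := hl₀.trans hl
  have hA₁ : 0 < A₁ := ha₀.trans_le haA
  -- `-K` bounds `∇a·x + a(d-2)` from below and `S` bounds `(b + c)|x|²` from above; `m` is chosen
  -- so that `a₀ m` exceeds `K + S`.
  obtain ⟨K, hK⟩ : ∃ K, K = A₂ * l₁ + 2 * A₁ := ⟨_, rfl⟩
  obtain ⟨S, hS⟩ : ∃ S, S = (B + C₀) * l₁ ^ 2 := ⟨_, rfl⟩
  have hK0 : 0 ≤ K := by rw [hK]; positivity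
  have hS0 : 0 ≤ S := by rw [hS]; positivity
  obtain ⟨m, hmdef⟩ : ∃ m, m = 2 + (K + S) / a₀ := ⟨_, rfl⟩
  have hm2 : 2 ≤ m := by
    have : 0 ≤ (K + S) / a₀ := by positivity
    linarith
  have hma : a₀ * m = 2 * a₀ + K + S := by
    rw [hmdef]
    field_simp
    ring
  refine ⟨(l₀ ^ (2 * m))⁻¹, m, by positivity, by linarith, fun x hxΩ => ?_⟩
  have hx := subset_closure hxΩ
  obtain ⟨hxl, hxu⟩ := hnorm x hx
  have hxpos : 0 < ‖x‖ := hl₀.trans_le hxl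
  have hdiff : DifferentiableAt ℝ a x :=
    (ha.contDiffAt (hU.mem_nhds (hUΩ hx))).differentiableAt (by norm_num)
  rw [divA_norm_rpow a _ m (by linarith) x (norm_pos_iff.mp hxpos) hdiff]
  set κ := (l₀ ^ (2 * m))⁻¹ with hκ
  have hκ0 : 0 < κ := by positivity
  have hΨ1 : 1 ≤ κ * ‖x‖ ^ (2 * m) := by
    rw [hκ, inv_mul_eq_div, one_le_div (by positivity)]
    exact Real.rpow_le_rpow hl₀.le hxl (by linarith)
  have hΨθ : (κ * ‖x‖ ^ (2 * m)) ^ (-θ) ≤ κ * ‖x‖ ^ (2 * m) := by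
    simpa using Real.rpow_le_rpow_of_exponent_le hΨ1 (show -θ ≤ 1 by linarith)
  have hpow : ‖x‖ ^ (2 * m) = ‖x‖ ^ (2 * m - 2) * ‖x‖ ^ 2 := by
    rw [← Real.rpow_natCast, ← Real.rpow_add hxpos]
    congr 1
    push_cast
    ring
  have hlin : -K ≤ fderiv ℝ a x x + a x * (d - 2) := by
    have h1 : |fderiv ℝ a x x| ≤ A₂ * l₁ :=
      ((fderiv ℝ a x).le_opNorm x).trans
        (mul_le_mul (hagrad x hx) hxu (norm_nonneg _) hA₂)
    have h2 := (abs_le.mp h1).1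
    have h3 : 0 ≤ a x * d := mul_nonneg (ha₀.le.trans (halb x hx)) (Nat.cast_nonneg d)
    have h4 := haub x hx
    rw [hK]
    linarith
  have hbracket : S < 4 * a x * m ^ 2 + 2 * (fderiv ℝ a x x + a x * (d - 2)) * m := by
    have h1 : a₀ * m ^ 2 ≤ a x * m ^ 2 := mul_le_mul_of_nonneg_right (halb x hx) (sq_nonneg m)
    have h2 : -K * m ≤ (fderiv ℝ a x x + a x * (d - 2)) * m :=
      mul_le_mul_of_nonneg_right hlin (by linarith)
    have h3 : a₀ * m ^ 2 = (2 * a₀ + K + S) * m := by rw [← hma]; ring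
    have h4 : 0 ≤ K * m := mul_nonneg hK0 (by linarith)
    have h5 : S * 2 ≤ S * m := mul_le_mul_of_nonneg_left hm2 hS0
    have h6 : 0 < a₀ * m := mul_pos ha₀ (by linarith)
    linarith
  have hbc : (b x + c x) * ‖x‖ ^ 2 ≤ S := by
    rw [hS]
    exact mul_le_mul (add_le_add (hbub x hx) (hcub x hx))
      (pow_le_pow_left₀ hxpos.le hxu 2) (sq_nonneg _) (add_nonneg hB hC₀)
  calc b x * (κ * ‖x‖ ^ (2 * m)) + c x * (κ * ‖x‖ ^ (2 * m)) ^ (-θ)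
      ≤ b x * (κ * ‖x‖ ^ (2 * m)) + c x * (κ * ‖x‖ ^ (2 * m)) :=
        add_le_add le_rfl (mul_le_mul_of_nonneg_left hΨθ (hclb x hx))
    _ = κ * ‖x‖ ^ (2 * m - 2) * ((b x + c x) * ‖x‖ ^ 2) := by rw [hpow]; ring
    _ < _ := mul_lt_mul_of_pos_left (hbc.trans_lt hbracket) (by positivity)
end
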